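/- For every positive integer s, the number of lattice points in the dilation sP of the cuboctahedron P, namely the cardinality of {x ∈ ℤ³ : 0 ≤ x_i ≤ s for i = 1,2,3, and 2(|x₁−sε₁|+|x₂−sε₂|+|x₃−sε₃|) ≥ s for every ε ∈ {0,1}³}, equals (5/6)s³ + 2s² + (5/3)s + 1 if s is even, and equals (5/6)s³ + (3/2)s² − (5/6)s − 3/2 if s is odd. -/

import Mathlib

open Finset

/-!
Each vertex `sε` of the cube `[0, s]^d` cuts off a corner: the lattice points at `ℓ¹`-distance less
than `s / 2` from it, i.e. at most `k = ⌊(s - 1) / 2⌋`. Distinct vertices are at distance at least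
`s > 2 * k`, so the corners are disjoint. Reflecting the cube carries each corner to the standard
simplex `{y ≥ 0 | ∑ i, y i ≤ k}`, which a slack variable turns into the weak compositions of `k`
into `d + 1` parts. Hence the count is `(s + 1) ^ d - 2 ^ d * (k + d).choose d`.
-/

lemma card_piAntidiag_nat_eq_multichoose {ι : Type*} [DecidableEq ι] (t : Finset ι) (n : ℕ) :
    #(piAntidiag t n) = (#t).multichoose n := by
  rw [← card_finsuppAntidiag_nat_eq_multichoose, finsuppAntidiag, card_map, card_attach]

section Corners

variable {ι : Type*}

/-- The vertex `sε` of the cube `[0, s]^ι`, where `ε` is encoded as a Boolean vector. -/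
def cubeVertex (s : ℕ) (ε : ι → Bool) (i : ι) : ℤ := if ε i then s else 0

/-- The reflection `x ↦ |x - sε|` of the cube `[0, s]^ι` (taken coordinatewise), which exchanges the
vertex `sε` with the origin. -/
def cubeReflection (s : ℕ) (ε : ι → Bool) (x : ι → ℤ) (i : ι) : ℤ := |x i - cubeVertex s ε i|

lemma cubeReflection_mem_Icc {s : ℕ} (ε : ι → Bool) {x : ι → ℤ}
    (hx : x ∈ Set.Icc 0 (fun _ ↦ (s : ℤ))) :
    cubeReflection s ε x ∈ Set.Icc 0 (fun _ ↦ (s : ℤ)) := by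
  refine ⟨fun i ↦ abs_nonneg _, fun i ↦ ?_⟩
  have h₀ : 0 ≤ x i := hx.1 i
  have hs : x i ≤ s := hx.2 i
  unfold cubeReflection cubeVertex
  grind

lemma cubeReflection_cubeReflection {s : ℕ} (ε : ι → Bool) {x : ι → ℤ}
    (hx : x ∈ Set.Icc 0 (fun _ ↦ (s : ℤ))) :
    cubeReflection s ε (cubeReflection s ε x) = x := by
  funext i
  have h₀ : 0 ≤ x i := hx.1 i
  have hs : x i ≤ s := hx.2 i
  unfold cubeReflection cubeVertex
  grind

variable [Fintype ι]

lemma le_sum_abs_cubeVertex_sub {s : ℕ} {ε δ : ι → Bool} (h : ε ≠ δ) :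
    (s : ℤ) ≤ ∑ i, |cubeVertex s ε i - cubeVertex s δ i| := by
  obtain ⟨i, hi⟩ := Function.ne_iff.mp h
  calc (s : ℤ) = |cubeVertex s ε i - cubeVertex s δ i| := by unfold cubeVertex; grind
    _ ≤ _ := single_le_sum (f := fun i ↦ |cubeVertex s ε i - cubeVertex s δ i|)
      (fun _ _ ↦ abs_nonneg _) (mem_univ i)

variable [DecidableEq ι]

/-- The lattice points of the cube `[0, s]^ι` at `ℓ¹`-distance at most `k` from the vertex `sε`. -/
noncomputable def cubeCorner (s k : ℕ) (ε : ι → Bool) : Finset (ι → ℤ) :=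
  {x ∈ Icc 0 (fun _ ↦ (s : ℤ)) | ∑ i, |x i - cubeVertex s ε i| ≤ k}

lemma disjoint_cubeCorner {s k : ℕ} (hk : 2 * k < s) {ε δ : ι → Bool} (h : ε ≠ δ) :
    Disjoint (cubeCorner s k ε) (cubeCorner s k δ) := by
  refine disjoint_left.mpr fun x hε hδ ↦ ?_
  have hxε : ∑ i, |x i - cubeVertex s ε i| ≤ k := (mem_filter.mp hε).2
  have hxδ : ∑ i, |x i - cubeVertex s δ i| ≤ k := (mem_filter.mp hδ).2
  have : (s : ℤ) ≤ 2 * k :=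
    calc (s : ℤ) ≤ ∑ i, |cubeVertex s ε i - cubeVertex s δ i| := le_sum_abs_cubeVertex_sub h
      _ ≤ ∑ i, (|x i - cubeVertex s ε i| + |x i - cubeVertex s δ i|) :=
        sum_le_sum fun i _ ↦ abs_sub_comm (x i) (cubeVertex s ε i) ▸ abs_sub_le _ (x i) _
      _ ≤ 2 * k := by rw [sum_add_distrib]; lia
  lia

lemma card_Icc_filter_sum_le_eq_card_piAntidiag {s k : ℕ} (hk : k ≤ s) :
    #{y ∈ Icc (0 : ι → ℤ) (fun _ ↦ (s : ℤ)) | ∑ i, y i ≤ (k : ℤ)} =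
      #(piAntidiag (univ : Finset (Option ι)) k) := by
  have mem_iff {z : Option ι → ℕ} :
      z ∈ piAntidiag univ k ↔ z none + ∑ i, z (some i) = k := by
    simp [Fintype.sum_option]
  refine card_nbij' (fun y o ↦ o.elim (k - ∑ i, y i : ℤ).toNat fun i ↦ (y i).toNat)
    (fun z i ↦ (z (some i) : ℤ)) (fun y hy ↦ ?_) (fun z hz ↦ ?_) (fun y hy ↦ ?_) (fun z hz ↦ ?_)
  · obtain ⟨hy, hsum⟩ := mem_filter.mp hy
    have hnonneg : ∀ i, 0 ≤ y i := (mem_Icc.mp hy).1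
    refine mem_iff.mpr (Nat.cast_injective (R := ℤ) ?_)
    simp [hnonneg, hsum]
  · have hsum : z none + ∑ i, z (some i) = k := mem_iff.mp hz
    have hle (i : ι) : z (some i) ≤ ∑ i, z (some i) :=
      single_le_sum (f := fun i ↦ z (some i)) (fun _ _ ↦ Nat.zero_le _) (mem_univ i)
    have hsum_le : ∑ i, z (some i) ≤ k := by lia
    have hsum_le' : ∑ i, (z (some i) : ℤ) ≤ k := mod_cast hsum_le
    exact mem_filter.mpr ⟨mem_Icc.mpr ⟨fun i ↦ Int.natCast_nonneg _,
      fun i ↦ Int.ofNat_le.mpr (((hle i).trans hsum_le).trans hk)⟩, hsum_le'⟩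
  · funext i
    exact Int.toNat_of_nonneg ((mem_Icc.mp (mem_filter.mp hy).1).1 i)
  · funext o
    cases o with
    | none => simp [← mem_iff.mp hz]
    | some i => simp

lemma card_Icc_filter_sum_le {s k : ℕ} (hk : k ≤ s) :
    #{y ∈ Icc (0 : ι → ℤ) (fun _ ↦ (s : ℤ)) | ∑ i, y i ≤ (k : ℤ)} =
      (k + Fintype.card ι).choose (Fintype.card ι) := by
  rw [card_Icc_filter_sum_le_eq_card_piAntidiag hk, card_piAntidiag_nat_eq_multichoose, card_univ,
    Fintype.card_option, Nat.multichoose_eq, Nat.add_right_comm, Nat.add_sub_cancel, add_comm,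
    Nat.choose_symm_add]

lemma card_cubeCorner {s k : ℕ} (hk : k ≤ s) (ε : ι → Bool) :
    #(cubeCorner s k ε) = (k + Fintype.card ι).choose (Fintype.card ι) := by
  rw [← card_Icc_filter_sum_le hk]
  refine card_nbij' (cubeReflection s ε) (cubeReflection s ε)
    (fun x hx ↦ ?_) (fun y hy ↦ ?_) (fun x hx ↦ ?_) (fun y hy ↦ ?_)
  · obtain ⟨hx, hdist⟩ := mem_filter.mp hx
    exact mem_filter.mpr ⟨mem_Icc.mpr (cubeReflection_mem_Icc ε (mem_Icc.mp hx)), hdist⟩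
  · obtain ⟨hy, hsum⟩ := mem_filter.mp hy
    refine mem_filter.mpr ⟨mem_Icc.mpr (cubeReflection_mem_Icc ε (mem_Icc.mp hy)), ?_⟩
    change ∑ i, cubeReflection s ε (cubeReflection s ε y) i ≤ k
    rwa [cubeReflection_cubeReflection ε (mem_Icc.mp hy)]
  · exact cubeReflection_cubeReflection ε (mem_Icc.mp (mem_filter.mp hx).1)
  · exact cubeReflection_cubeReflection ε (mem_Icc.mp (mem_filter.mp hy).1)

variable (ι) in
/-- The lattice points of the cube `[0, s]^ι` at `ℓ¹`-distance more than `k` from every vertex. -/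
noncomputable def truncatedCube (s k : ℕ) : Finset (ι → ℤ) :=
  {x ∈ Icc 0 (fun _ ↦ (s : ℤ)) | ∀ ε, k < ∑ i, |x i - cubeVertex s ε i|}

lemma card_truncatedCube_add {s k : ℕ} (hk : 2 * k < s) :
    #(truncatedCube ι s k) + 2 ^ Fintype.card ι * (k + Fintype.card ι).choose (Fintype.card ι) =
      (s + 1) ^ Fintype.card ι := by
  have hcut : {x ∈ Icc (0 : ι → ℤ) (fun _ ↦ (s : ℤ)) |
      ¬ ∀ ε, ↑k < ∑ i, |x i - cubeVertex s ε i|} = univ.biUnion (cubeCorner s k) := by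
    ext x
    simp [cubeCorner]
  have hcorners : #(univ.biUnion (cubeCorner (ι := ι) s k)) =
      2 ^ Fintype.card ι * (k + Fintype.card ι).choose (Fintype.card ι) := by
    rw [card_biUnion fun ε _ δ _ h ↦ disjoint_cubeCorner hk h]
    simp [card_cubeCorner (by lia : k ≤ s)]
  have hcube : #(Icc (0 : ι → ℤ) (fun _ ↦ (s : ℤ))) = (s + 1) ^ Fintype.card ι := by
    simp [Pi.card_Icc]
  rw [← hcorners, ← hcut, truncatedCube, card_filter_add_card_filter_not, hcube]

end Corners

lemma cast_add_three_choose_three (k : ℕ) :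
    ((k + 3).choose 3 : ℚ) = (k + 1) * (k + 2) * (k + 3) / 6 := by
  have h : (k + 1) * (k + 2) * (k + 3) = 6 * (k + 3).choose 3 := by
    rw [show 6 = Nat.factorial 3 from rfl, ← Nat.ascFactorial_eq_factorial_mul_choose]
    simp only [Nat.ascFactorial]
    ring
  rw [eq_div_iff (by norm_num), mul_comm]
  exact_mod_cast h.symm

lemma cast_eq_of_add_corners_eq_of_even {N s : ℕ} (hs : 0 < s) (hs_even : s % 2 = 0)
    (hN : N + 2 ^ 3 * ((s - 1) / 2 + 3).choose 3 = (s + 1) ^ 3) :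
    (N : ℚ) = 5 / 6 * (s : ℚ) ^ 3 + 2 * (s : ℚ) ^ 2 + 5 / 3 * (s : ℚ) + 1 := by
  obtain ⟨k, rfl⟩ : ∃ k, s = 2 * k + 2 := ⟨(s - 1) / 2, by lia⟩
  rw [show (2 * k + 2 - 1) / 2 = k by lia] at hN
  have hNQ : (N : ℚ) + 2 ^ 3 * (k + 3).choose 3 = (2 * k + 2 + 1) ^ 3 := mod_cast hN
  rw [eq_sub_of_add_eq hNQ, cast_add_three_choose_three]
  push_cast
  ring

lemma cast_eq_of_add_corners_eq_of_odd {N s : ℕ} (hs_odd : s % 2 = 1)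
    (hN : N + 2 ^ 3 * ((s - 1) / 2 + 3).choose 3 = (s + 1) ^ 3) :
    (N : ℚ) = 5 / 6 * (s : ℚ) ^ 3 + 3 / 2 * (s : ℚ) ^ 2 - 5 / 6 * (s : ℚ) - 3 / 2 := by
  obtain ⟨k, rfl⟩ : ∃ k, s = 2 * k + 1 := ⟨(s - 1) / 2, by lia⟩
  rw [show (2 * k + 1 - 1) / 2 = k by lia] at hN
  have hNQ : (N : ℚ) + 2 ^ 3 * (k + 3).choose 3 = (2 * k + 1 + 1) ^ 3 := mod_cast hN
  rw [eq_sub_of_add_eq hNQ, cast_add_three_choose_three]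
  push_cast
  ring

theorem cuboctahedron_ehrhart_general (ι : Type*) [Fintype ι] {s : ℕ} (hs : 0 < s) :
    Nat.card {x : ι → ℤ //
        (∀ i, 0 ≤ x i ∧ x i ≤ (s : ℤ)) ∧
        (∀ ε : ι → Bool,
          (s : ℤ) ≤ 2 * ∑ i, |x i - (if ε i then (s : ℤ) else 0)|)} +
      2 ^ Fintype.card ι * ((s - 1) / 2 + Fintype.card ι).choose (Fintype.card ι) =
      (s + 1) ^ Fintype.card ι := by
  classical
  rw [← card_truncatedCube_add (by lia : 2 * ((s - 1) / 2) < s)]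
  congr 1
  refine Nat.subtype_card _ fun x ↦ ?_
  have hdist (d : ℤ) : ((s - 1) / 2 : ℕ) < d ↔ (s : ℤ) ≤ 2 * d := by lia
  simp only [truncatedCube, mem_filter, mem_Icc, Pi.le_def, ← forall_and, hdist, cubeVertex,
    Pi.zero_apply]

theorem cuboctahedron_ehrhart (s : ℕ) (hs : 0 < s) :
    (s % 2 = 0 →
      ((Nat.card {x : Fin 3 → ℤ //
          (∀ i, 0 ≤ x i ∧ x i ≤ (s : ℤ)) ∧
          (∀ ε : Fin 3 → Bool,
            (s : ℤ) ≤ 2 * ∑ i, |x i - (if ε i then (s : ℤ) else 0)|)} : ℚ) =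
        5 / 6 * (s : ℚ) ^ 3 + 2 * (s : ℚ) ^ 2 + 5 / 3 * (s : ℚ) + 1)) ∧
    (s % 2 = 1 →
      ((Nat.card {x : Fin 3 → ℤ //
          (∀ i, 0 ≤ x i ∧ x i ≤ (s : ℤ)) ∧
          (∀ ε : Fin 3 → Bool,
            (s : ℤ) ≤ 2 * ∑ i, |x i - (if ε i then (s : ℤ) else 0)|)} : ℚ) =
        5 / 6 * (s : ℚ) ^ 3 + 3 / 2 * (s : ℚ) ^ 2 - 5 / 6 * (s : ℚ) - 3 / 2)) := by
  have hcard := cuboctahedron_ehrhart_general (Fin 3) hs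
  rw [Fintype.card_fin] at hcard
  exact ⟨fun hs_even ↦ cast_eq_of_add_corners_eq_of_even hs hs_even hcard,
    fun hs_odd ↦ cast_eq_of_add_corners_eq_of_odd hs_odd hcard⟩
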